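/- arXiv:2302.11073 — 3 statements merged into one kernel-verified Lean document; each statement's English description precedes it below -/
import Mathlib

section
/- Let γ > 0 be a real number and let z be a complex number with Re z > 0 and Im z > 0. Then the imaginary part of (deriv Γ_ℂ)(z+γ)/Γ_ℂ(z+γ) − (deriv Γ_ℂ)(z)/Γ_ℂ(z) is strictly negative. -/
open Filter Topology MeasureTheory Set

lemma aux_ne {s : ℂ} (hs : 0 < s.re) (m : ℕ) : s ≠ -m := by
  intro h
  rw [h] at hs
  simp at hs
  have : (0:ℝ) ≤ m := Nat.cast_nonneg m
  linarith

lemma aux_add_ne {s : ℂ} (hs : 0 < s.re) (m : ℕ) : s + m ≠ 0 := by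
  intro h
  exact aux_ne hs m (eq_neg_of_add_eq_zero_left h)

lemma aux_bound {s : ℂ} (hs : 0 < s.re) {n : ℕ} (hn : n ≠ 0) :
    ‖Complex.GammaSeq s n‖ ≤ Real.Gamma s.re := by
  rw [Complex.GammaSeq_eq_approx_Gamma_integral hs hn, Real.Gamma_eq_integral hs]
  have hn0 : (0:ℝ) ≤ n := Nat.cast_nonneg n
  have hconv := Real.GammaIntegral_convergent hs
  have h1 : ‖∫ x : ℝ in (0:ℝ)..n, (((1 - x / n) ^ n : ℝ) : ℂ) * (x : ℂ) ^ (s - 1)‖ ≤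
      ∫ x : ℝ in (0:ℝ)..n, Real.exp (-x) * x ^ (s.re - 1) := by
    refine intervalIntegral.norm_integral_le_of_norm_le hn0 ?_ ?_
    · filter_upwards with x hx
      rw [norm_mul, Complex.norm_of_nonneg
          (pow_nonneg (sub_nonneg.mpr <| div_le_one_of_le₀ hx.2 <| by positivity) _),
          Complex.norm_cpow_eq_rpow_re_of_pos hx.1, Complex.sub_re, Complex.one_re]
      have := hx.1.le
      gcongr
      exact Real.one_sub_div_pow_le_exp_neg hx.2
    · rw [intervalIntegrable_iff_integrableOn_Ioc_of_le hn0]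
      exact hconv.mono_set Ioc_subset_Ioi_self
  refine h1.trans ?_
  rw [intervalIntegral.integral_of_le hn0]
  refine setIntegral_mono_set hconv ?_ (Ioc_subset_Ioi_self.eventuallyLE)
  rw [EventuallyLE, ae_restrict_iff' measurableSet_Ioi]
  filter_upwards with x hx
  have : (0:ℝ) < x := hx
  simp only [Pi.zero_apply]
  positivity

lemma aux_hasDeriv {s : ℂ} (hs : 0 < s.re) {n : ℕ} (hn : n ≠ 0) :
    DifferentiableAt ℂ (fun w => Complex.GammaSeq w n) s ∧
    logDeriv (fun w => Complex.GammaSeq w n) s =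
      (Real.log n : ℂ) - ∑ j ∈ Finset.range (n + 1), 1 / (s + j) := by
  have hn' : (n : ℂ) ≠ 0 := Nat.cast_ne_zero.mpr hn
  have hd1 : HasDerivAt (fun w : ℂ => (n : ℂ) ^ w) ((n:ℂ) ^ s * Complex.log n) s := by
    simpa using (hasDerivAt_id s).const_cpow (c := (n:ℂ)) (Or.inl hn')
  have hd2 : DifferentiableAt ℂ (fun w : ℂ => ∏ j ∈ Finset.range (n + 1), (w + (j:ℂ))) s := by
    fun_prop
  have hp : ∏ j ∈ Finset.range (n + 1), (s + (j:ℂ)) ≠ 0 :=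
    Finset.prod_ne_zero_iff.mpr fun j _ => aux_add_ne hs j
  have hpw : (n:ℂ) ^ s ≠ 0 := by simp [Complex.cpow_eq_zero_iff, hn']
  have hfac : ((n.factorial : ℕ) : ℂ) ≠ 0 := Nat.cast_ne_zero.mpr n.factorial_ne_zero
  have hd3 : DifferentiableAt ℂ (fun w : ℂ => (n : ℂ) ^ w * (n.factorial : ℂ)) s :=
    hd1.differentiableAt.mul_const _
  refine ⟨hd3.div hd2 hp, ?_⟩
  have e : (fun w => Complex.GammaSeq w n) = fun w : ℂ =>
    ((n : ℂ) ^ w * (n.factorial : ℂ)) / ∏ j ∈ Finset.range (n + 1), (w + (j:ℂ)) := rfl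
  rw [e, logDeriv_div (f := fun w : ℂ => (n : ℂ) ^ w * (n.factorial : ℂ))
    (g := fun w : ℂ => ∏ j ∈ Finset.range (n + 1), (w + (j:ℂ))) s (mul_ne_zero hpw hfac) hp hd3 hd2,
    logDeriv_mul_const s _ hfac, logDeriv_prod (f := fun (j : ℕ) (w : ℂ) => w + (j:ℂ))]
  · congr 1
    · rw [logDeriv_apply, show deriv (HPow.hPow (n:ℂ)) s = _ from hd1.deriv, mul_div_cancel_left₀ _ hpw, Complex.natCast_log]
    · refine Finset.sum_congr rfl fun j _ => ?_
      rw [logDeriv_apply]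
      simp
  · intro j _
    exact aux_add_ne hs j
  · intro j _
    fun_prop

lemma aux_deriv_tendsto {z : ℂ} (hz : 0 < z.re) :
    Tendsto (fun n : ℕ => deriv (fun w => Complex.GammaSeq w n) z) atTop
      (𝓝 (deriv Complex.Gamma z)) := by
  have hU : IsOpen {w : ℂ | 0 < w.re} := isOpen_lt continuous_const Complex.continuous_re
  set R : ℝ := z.re / 2 with hR
  have hRp : 0 < R := by positivity
  have hsub : Metric.closedBall z R ⊆ {w : ℂ | 0 < w.re} := by
    intro w hw
    rw [mem_closedBall_iff_norm] at hw
    have := (Complex.abs_re_le_norm (w - z)).trans hw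
    rw [Complex.sub_re] at this
    have := (abs_le.mp this).1
    simp only [mem_ofPred_eq]
    linarith
  have hcirc : ∀ θ, 0 < (circleMap z R θ).re := fun θ =>
    hsub (circleMap_mem_closedBall z hRp.le θ)
  have hne : ∀ θ, circleMap z R θ - z ≠ 0 := fun θ =>
    sub_ne_zero.mpr (circleMap_ne_center hRp.ne')
  have hG : DifferentiableOn ℂ Complex.Gamma {w : ℂ | 0 < w.re} := fun w hw =>
    (Complex.differentiableAt_Gamma w (aux_ne hw)).differentiableWithinAt
  have hGn : ∀ n : ℕ, n ≠ 0 →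
      DifferentiableOn ℂ (fun w => Complex.GammaSeq w n) {w : ℂ | 0 < w.re} := fun n hn w hw =>
    (aux_hasDeriv hw hn).1.differentiableWithinAt
  have hc0 : Continuous (circleMap z R) := continuous_circleMap z R
  have hc1 : Continuous (fun θ => ((circleMap z R θ - z) ^ 2)⁻¹) :=
    ((hc0.sub continuous_const).pow 2).inv₀ fun θ => pow_ne_zero 2 (hne θ)
  have hc2 : Continuous (deriv (circleMap z R)) := by
    have : deriv (circleMap z R) = fun θ => circleMap 0 R θ * Complex.I := by
      ext θ; simp
    rw [this]
    exact (continuous_circleMap 0 R).mul continuous_const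
  rw [← Complex.two_pi_I_inv_smul_circleIntegral_sub_sq_inv_smul_of_differentiable hU hsub hG
    (Metric.mem_ball_self hRp)]
  have key : Tendsto (fun n : ℕ => (2 * (Real.pi : ℂ) * Complex.I)⁻¹ •
      ∮ w in C(z, R), ((w - z) ^ 2)⁻¹ • Complex.GammaSeq w n) atTop
      (𝓝 ((2 * (Real.pi : ℂ) * Complex.I)⁻¹ •
      ∮ w in C(z, R), ((w - z) ^ 2)⁻¹ • Complex.Gamma w)) := by
    refine Tendsto.const_smul ?_ _
    unfold circleIntegral
    refine intervalIntegral.tendsto_integral_filter_of_dominated_convergence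
      (fun θ => ‖deriv (circleMap z R) θ‖ *
        (‖((circleMap z R θ - z) ^ 2)⁻¹‖ * Real.Gamma (circleMap z R θ).re)) ?_ ?_ ?_ ?_
    · filter_upwards [eventually_ne_atTop 0] with n hn
      refine Continuous.aestronglyMeasurable ?_
      refine hc2.smul (hc1.smul ?_)
      exact (hGn n hn).continuousOn.comp_continuous hc0 hcirc
    · filter_upwards [eventually_ne_atTop 0] with n hn
      filter_upwards with θ _
      rw [norm_smul, norm_smul]
      gcongr
      exact aux_bound (hcirc θ) hn
    · refine Continuous.intervalIntegrable ?_ _ _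
      refine hc2.norm.mul (hc1.norm.mul ?_)
      refine continuous_iff_continuousAt.mpr fun θ => ?_
      have h1 : ContinuousAt Real.Gamma (circleMap z R θ).re := by
        refine (Real.differentiableAt_Gamma fun m h => ?_).continuousAt
        have := hcirc θ
        have : (0:ℝ) ≤ m := Nat.cast_nonneg m
        linarith
      exact ContinuousAt.comp (f := fun θ => (circleMap z R θ).re) h1
        (Complex.continuous_re.comp hc0).continuousAt
    · filter_upwards with θ _
      exact ((Complex.GammaSeq_tendsto_Gamma _).const_smul _).const_smul _
  refine key.congr' ?_
  filter_upwards [eventually_ne_atTop 0] with n hn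
  exact Complex.two_pi_I_inv_smul_circleIntegral_sub_sq_inv_smul_of_differentiable hU hsub
    (hGn n hn) (Metric.mem_ball_self hRp)

lemma aux_digamma {z : ℂ} (hz : 0 < z.re) :
    Tendsto (fun n : ℕ => (Real.log n : ℂ) - ∑ j ∈ Finset.range (n + 1), 1 / (z + j)) atTop
      (𝓝 (deriv Complex.Gamma z / Complex.Gamma z)) := by
  refine ((aux_deriv_tendsto hz).div (Complex.GammaSeq_tendsto_Gamma z)
    (Complex.Gamma_ne_zero_of_re_pos hz)).congr' ?_
  filter_upwards [eventually_ne_atTop 0] with n hn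
  rw [← (aux_hasDeriv hz hn).2]
  rfl

lemma aux_term {γ : ℝ} (hγ : 0 < γ) {z : ℂ} (hre : 0 < z.re) (him : 0 < z.im) (j : ℕ) :
    (1 / (z + j) - 1 / (z + γ + j)).im < 0 := by
  have hj : (0:ℝ) ≤ j := Nat.cast_nonneg j
  simp only [one_div, Complex.sub_im, Complex.inv_im, Complex.normSq_apply, Complex.add_re,
    Complex.add_im, Complex.natCast_re, Complex.natCast_im, Complex.ofReal_re,
    Complex.ofReal_im, add_zero]
  rw [neg_div, neg_div, sub_neg_eq_add, neg_add_lt_iff_lt_add, add_zero]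
  apply div_lt_div_of_pos_left him
  · positivity
  · nlinarith [mul_pos hγ hre, mul_pos hγ hγ, mul_nonneg hγ.le hj]

theorem stmt5 (γ : ℝ) (hγ : 0 < γ) (z : ℂ) (hre : 0 < z.re) (him : 0 < z.im) :
    (deriv Complex.Gamma (z + (γ : ℂ)) / Complex.Gamma (z + (γ : ℂ)) -
        deriv Complex.Gamma z / Complex.Gamma z).im < 0 := by
  have hre' : 0 < (z + (γ : ℂ)).re := by simp; linarith
  have ht := (Complex.continuous_im.tendsto _).comp ((aux_digamma hre').sub (aux_digamma hre))
  refine lt_of_le_of_lt (le_of_tendsto ht (Eventually.of_forall fun n => ?_))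
    (aux_term hγ hre him 0)
  have e : ((Real.log n : ℂ) - ∑ j ∈ Finset.range (n + 1), 1 / (z + γ + j)) -
      ((Real.log n : ℂ) - ∑ j ∈ Finset.range (n + 1), 1 / (z + j)) =
      ∑ j ∈ Finset.range (n + 1), (1 / (z + j) - 1 / (z + γ + j)) := by
    rw [Finset.sum_sub_distrib]; ring
  simp only [Function.comp_apply]
  rw [e, Complex.im_sum, Finset.sum_range_succ']
  have : ∑ k ∈ Finset.range n, (1 / (z + (k + 1 : ℕ)) - 1 / (z + γ + (k + 1 : ℕ))).im ≤ 0 :=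
    Finset.sum_nonpos fun k _ => (aux_term hγ hre him (k + 1)).le
  linarith
end

section
/- For every integer n ≥ 4 there exists a unique real number c with 0 < c < n/2 − 1 such that for all real γ with 0 < γ < n/2 − 1, the inequality Ξ(n,γ) < ((n+2γ)/(n−2γ)) · Q(n,γ) holds if and only if γ < c. -/
/-- `Ξ(n,γ) = 4^γ · Γ(n/4+γ/2−1/4)² / Γ(n/4−γ/2−1/4)²`. -/
noncomputable def Xi (n : ℤ) (γ : ℝ) : ℝ :=
  (4 : ℝ) ^ γ * Real.Gamma ((n : ℝ) / 4 + γ / 2 - 1 / 4) ^ 2 /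
    Real.Gamma ((n : ℝ) / 4 - γ / 2 - 1 / 4) ^ 2

/-- The fractional curvature `Q_γ(n,1)` of the trivial solution on `Sⁿ∖S¹`. -/
noncomputable def Qcurv (n : ℤ) (γ : ℝ) : ℝ :=
  (4 : ℝ) ^ γ * Real.Gamma (((n : ℝ) + 2 * γ) / 4) * Real.Gamma (((n : ℝ) - 2 + 2 * γ) / 4) /
    (Real.Gamma (((n : ℝ) - 2 * γ) / 4) * Real.Gamma (((n : ℝ) - 2 - 2 * γ) / 4))

namespace Aux15

open Filter Topology Set

noncomputable def ph (y : ℝ) : ℝ := Real.log (y + 5/4) + Real.log (y - 1/4) - 2 * Real.log y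
noncomputable def ph1 (y : ℝ) : ℝ := 1 / (y + 5/4) + 1 / (y - 1/4) - 2 / y
noncomputable def ph2 (y : ℝ) : ℝ := 2 / y ^ 2 - 1 / (y + 5/4) ^ 2 - 1 / (y - 1/4) ^ 2

lemma ph_deriv {y : ℝ} (hy : 1/4 < y) : HasDerivAt ph (ph1 y) y := by
  unfold ph ph1
  have h1 := ((hasDerivAt_id y).add_const (5/4)).log (by simp only [id]; linarith)
  have h2 := ((hasDerivAt_id y).sub_const (1/4)).log (by simp only [id]; linarith)
  have h3 := ((hasDerivAt_id y).log (by simp only [id]; linarith)).const_mul 2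
  refine ((h1.add h2).sub h3).congr_deriv ?_
  simp only [id]; ring

lemma ph1_deriv {y : ℝ} (hy : 1/4 < y) : HasDerivAt ph1 (ph2 y) y := by
  unfold ph1 ph2
  have h1 := ((hasDerivAt_id y).add_const (5/4)).inv (by simp only [id]; linarith)
  have h2 := ((hasDerivAt_id y).sub_const (1/4)).inv (by simp only [id]; linarith)
  have h3 := ((hasDerivAt_id y).inv (by simp only [id]; linarith)).const_mul 2
  refine (((h1.add h2).sub h3).congr_deriv ?_).congr_of_eventuallyEq ?_
  · simp only [id]; ring
  · refine Filter.Eventually.of_forall fun x => ?_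
    simp [div_eq_mul_inv]

lemma ph1_neg {y : ℝ} (hy : 5/8 < y) : ph1 y < 0 := by
  have h : ph1 y = -((y - 5/8) / (y * (y + 5/4) * (y - 1/4))) := by
    unfold ph1
    have h1 : y ≠ 0 := by linarith
    have h2 : y + 5/4 ≠ 0 := by linarith
    have h3 : y - 1/4 ≠ 0 := by linarith
    rw [div_add_div _ _ h2 h3, div_sub_div _ _ (mul_ne_zero h2 h3) h1, ← neg_div,
      div_eq_div_iff (mul_ne_zero (mul_ne_zero h2 h3) h1) (mul_ne_zero (mul_ne_zero h1 h2) h3)]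
    ring
  rw [h, neg_lt_zero]
  have h1 : 0 < y := by linarith
  have h2 : 0 < y + 5/4 := by linarith
  have h3 : 0 < y - 1/4 := by linarith
  have h4 : 0 < y - 5/8 := by linarith
  positivity

lemma ph_anti : StrictAntiOn ph (Ici (5/8)) := by
  apply strictAntiOn_of_deriv_neg (convex_Ici _)
  · intro y hy
    simp only [mem_Ici] at hy
    exact (ph_deriv (by linarith)).continuousAt.continuousWithinAt
  · intro y hy
    simp only [interior_Ici, mem_Ioi] at hy
    rw [(ph_deriv (by linarith)).deriv]
    exact ph1_neg hy

lemma ph2_first {y : ℝ} (h1 : 1/4 < y) (h2 : y ≤ 5/8) : ph2 y ≤ -(7/4) := by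
  unfold ph2
  have h3 : 0 < y - 1/4 := by linarith
  have e : 0 ≤ 1 / (y + 5/4) ^ 2 := by positivity
  have : 2 / y ^ 2 + 7/4 ≤ 1 / (y - 1/4) ^ 2 := by
    rw [div_add' _ _ _ (by positivity), div_le_div_iff₀ (by positivity) (by positivity)]
    obtain ⟨s, rfl⟩ : ∃ s, y = s + 1/4 := ⟨y - 1/4, by ring⟩
    have hs : s ≤ 3/8 := by linarith
    have hs0 : 0 < s := by linarith
    ring_nf
    have a2 : s^2 ≤ (3/8) * s := by nlinarith
    have a3 : s^3 ≤ (3/8)^2 * s := by nlinarith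
    have a4 : s^4 ≤ (3/8)^3 * s := by nlinarith
    nlinarith
  linarith

lemma ph2_b {y : ℝ} (h1 : 7/8 ≤ y) : - ph2 y ≤ 1/2 := by
  unfold ph2
  have h3 : 0 < y - 1/4 := by linarith
  have : 1 / (y + 5/4) ^ 2 ≤ 1/4 := by
    rw [div_le_div_iff₀ (by positivity) (by positivity)]; nlinarith
  have : 1 / (y - 1/4) ^ 2 ≤ 2 / y^2 + 1/4 := by
    rw [div_add' _ _ _ (by positivity), div_le_div_iff₀ (by positivity) (by positivity)]
    obtain ⟨s, rfl⟩ : ∃ s, y = s + 7/8 := ⟨y - 7/8, by ring⟩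
    have hs0 : 0 ≤ s := by linarith
    ring_nf
    have a2 : 0 ≤ s^2 := by positivity
    have a3 : 0 ≤ s^3 := by positivity
    have a4 : 0 ≤ s^4 := by positivity
    linarith
  linarith

lemma ph2_nonneg {y : ℝ} (h1 : 1 ≤ y) : 0 ≤ ph2 y := by
  unfold ph2
  obtain ⟨s, rfl⟩ : ∃ s, y = s + 1 := ⟨y - 1, by ring⟩
  have hs0 : 0 ≤ s := by linarith
  have h3 : 0 < s + 1 - 1/4 := by linarith
  rw [sub_sub, sub_nonneg, div_add_div _ _ (by positivity) (by positivity),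
    div_le_div_iff₀ (by positivity) (by positivity)]
  ring_nf
  have a2 : 0 ≤ s^2 := by positivity
  have a3 : 0 ≤ s^3 := by positivity
  have a4 : 0 ≤ s^4 := by positivity
  linarith

lemma ph2_tel {y : ℝ} (h1 : 1 ≤ y) : ph2 y ≤ 1 / y^2 - 1 / (y+2)^2 := by
  unfold ph2
  have h3 : 0 < y - 1/4 := by linarith
  have : 1 / y ^ 2 ≤ 1 / (y - 1/4) ^ 2 := by
    apply one_div_le_one_div_of_le (by positivity); nlinarith
  have : 1 / (y+2) ^ 2 ≤ 1 / (y + 5/4) ^ 2 := by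
    apply one_div_le_one_div_of_le (by positivity); nlinarith
  have : 2 / y^2 = 1/y^2 + 1/y^2 := by ring
  linarith

lemma sum_bound {a b : ℝ} (h1 : 1/4 < a) (h2 : a ≤ 5/8) (h3 : 7/8 ≤ b) (N : ℕ) :
    ∑ m ∈ Finset.range (N+1), (ph2 (a + m) - ph2 (b + m)) ≤
      -(7/4) + 1/2 + 1/(a+1)^2 + 1/(a+2)^2 - 1/(a+N+1)^2 - 1/(a+N+2)^2 := by
  induction N with
  | zero =>
    have := ph2_first h1 h2
    have := ph2_b h3
    simp
    linarith
  | succ N ih =>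
    rw [Finset.sum_range_succ]
    have hN : (0:ℝ) ≤ N := Nat.cast_nonneg N
    have e1 := @ph2_nonneg (b + ((N+1 : ℕ) : ℝ)) (by push_cast; linarith)
    have e2 := @ph2_tel (a + ((N+1 : ℕ) : ℝ)) (by push_cast; linarith)
    push_cast at e1 e2 ⊢
    have r1 : a + ((N:ℝ)+1) = a + N + 1 := by ring
    rw [r1] at e2 ⊢
    rw [show a + (N:ℝ) + 1 + 1 = a + N + 2 by ring]
    linarith

lemma sum_bound' {a b : ℝ} (h1 : 1/4 < a) (h2 : a ≤ 5/8) (h3 : 7/8 ≤ b) (N : ℕ) :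
    ∑ m ∈ Finset.range (N+1), (ph2 (a + m) - ph2 (b + m)) ≤ 0 := by
  refine (sum_bound h1 h2 h3 N).trans ?_
  have : 1 / (a+1)^2 ≤ 1 := by
    rw [div_le_one (by positivity)]; nlinarith
  have : 1 / (a+2)^2 ≤ 1/4 := by
    rw [div_le_div_iff₀ (by positivity) (by positivity)]; nlinarith
  have : 0 ≤ 1 / (a+N+1)^2 := by positivity
  have : 0 ≤ 1 / (a+N+2)^2 := by positivity
  linarith

noncomputable def G (M : ℝ) (N : ℕ) (t : ℝ) : ℝ :=
  ∑ m ∈ Finset.range (N+1), (ph (M - t + m) - ph (M + t + m))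

noncomputable def G1 (M : ℝ) (N : ℕ) (t : ℝ) : ℝ :=
  ∑ m ∈ Finset.range (N+1), (- ph1 (M - t + m) - ph1 (M + t + m))

lemma G_deriv {M t : ℝ} (N : ℕ) (h0 : 0 ≤ t) (h1 : 1/4 < M - t) :
    HasDerivAt (G M N) (G1 M N t) t := by
  unfold G G1
  apply HasDerivAt.fun_sum
  intro m _
  have hm : (0:ℝ) ≤ m := Nat.cast_nonneg m
  have e1 := (ph_deriv (y := M - t + m) (by linarith)).comp t
    (((hasDerivAt_id t).const_sub M).add_const (m:ℝ))
  have e2 := (ph_deriv (y := M + t + m) (by linarith)).comp t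
    (((hasDerivAt_id t).const_add M).add_const (m:ℝ))
  refine (e1.sub e2).congr_deriv ?_
  ring

lemma G1_deriv {M t : ℝ} (N : ℕ) (h0 : 0 ≤ t) (h1 : 1/4 < M - t) :
    HasDerivAt (G1 M N) (∑ m ∈ Finset.range (N+1), (ph2 (M - t + m) - ph2 (M + t + m))) t := by
  unfold G1
  apply HasDerivAt.fun_sum
  intro m _
  have hm : (0:ℝ) ≤ m := Nat.cast_nonneg m
  have e1 := (ph1_deriv (y := M - t + m) (by linarith)).comp t
    (((hasDerivAt_id t).const_sub M).add_const (m:ℝ))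
  have e2 := (ph1_deriv (y := M + t + m) (by linarith)).comp t
    (((hasDerivAt_id t).const_add M).add_const (m:ℝ))
  refine (e1.neg.sub e2).congr_deriv ?_
  ring

lemma G_concave {M : ℝ} (hM : 3/4 ≤ M) (N : ℕ) :
    ConcaveOn ℝ (Ico (M - 5/8) (M - 1/4)) (G M N) := by
  apply concaveOn_of_hasDerivWithinAt2_nonpos (f' := G1 M N)
    (f'' := fun t => ∑ m ∈ Finset.range (N+1), (ph2 (M - t + m) - ph2 (M + t + m)))
    (convex_Ico _ _)
  · intro t ht
    exact (G_deriv N (by linarith [ht.1]) (by linarith [ht.2])).continuousAt.continuousWithinAt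
  · intro t ht
    rw [interior_Ico] at ht
    exact (G_deriv N (by linarith [ht.1]) (by linarith [ht.2])).hasDerivWithinAt
  · intro t ht
    rw [interior_Ico] at ht
    exact (G1_deriv N (by linarith [ht.1]) (by linarith [ht.2])).hasDerivWithinAt
  · intro t ht
    rw [interior_Ico] at ht
    exact sum_bound' (by linarith [ht.2]) (by linarith [ht.1]) (by linarith [ht.1]) N

noncomputable def f (x : ℝ) : ℝ :=
  Real.log (Real.Gamma (x + 5/4)) + Real.log (Real.Gamma (x - 1/4)) - 2 * Real.log (Real.Gamma x)

noncomputable def g (M t : ℝ) : ℝ := f (M + t) - f (M - t)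

lemma G_tendsto {M t : ℝ} (h0 : 0 ≤ t) (h1 : 1/4 < M - t) :
    Tendsto (fun N => G M N t) atTop (𝓝 (g M t)) := by
  have key : ∀ x : ℝ, 1/4 < x → Tendsto (fun N => Real.BohrMollerup.logGammaSeq (x + 5/4) N +
      Real.BohrMollerup.logGammaSeq (x - 1/4) N - 2 * Real.BohrMollerup.logGammaSeq x N) atTop
      (𝓝 (f x)) := by
    intro x hx
    exact ((Real.BohrMollerup.tendsto_log_gamma (by linarith)).add
      (Real.BohrMollerup.tendsto_log_gamma (by linarith))).sub
      ((Real.BohrMollerup.tendsto_log_gamma (by linarith)).const_mul 2)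
  refine ((key (M + t) (by linarith)).sub (key (M - t) h1)).congr ?_
  intro N
  have e : ∀ x : ℝ, Real.BohrMollerup.logGammaSeq (x + 5/4) N +
      Real.BohrMollerup.logGammaSeq (x - 1/4) N - 2 * Real.BohrMollerup.logGammaSeq x N =
      Real.log N - ∑ m ∈ Finset.range (N+1), ph (x + m) := by
    intro x
    simp only [Real.BohrMollerup.logGammaSeq, ph, Finset.sum_sub_distrib, Finset.sum_add_distrib,
      ← Finset.mul_sum]
    have r1 : ∀ m : ℕ, x + (m:ℝ) + 5/4 = x + 5/4 + m := fun m => by ring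
    have r2 : ∀ m : ℕ, x + (m:ℝ) - 1/4 = x - 1/4 + m := fun m => by ring
    simp only [r1, r2]
    ring
  rw [e, e, G, Finset.sum_sub_distrib]
  ring

lemma g_concave {M : ℝ} (hM : 3/4 ≤ M) :
    ConcaveOn ℝ (Ico (M - 5/8) (M - 1/4)) (g M) := by
  refine ⟨convex_Ico _ _, ?_⟩
  intro x hx y hy a b ha hb hab
  have hz := convex_Ico (M - 5/8) (M - 1/4) hx hy ha hb hab
  have T : ∀ t ∈ Ico (M - 5/8) (M - 1/4), Tendsto (fun N => G M N t) atTop (𝓝 (g M t)) :=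
    fun t ht => G_tendsto (by linarith [ht.1]) (by linarith [ht.2])
  exact le_of_tendsto_of_tendsto' (((T x hx).const_smul a).add ((T y hy).const_smul b)) (T _ hz)
    (fun N => (G_concave hM N).2 hx hy ha hb hab)

lemma g_pos {M t : ℝ} (h0 : 0 < t) (h1 : t ≤ M - 5/8) : 0 < g M t := by
  have h : 0 < ph (M - t) - ph (M + t) := by
    have := ph_anti (a := M - t) (b := M + t) (by simp only [mem_Ici]; linarith)
      (by simp only [mem_Ici]; linarith) (by linarith)
    linarith
  refine lt_of_lt_of_le h (ge_of_tendsto' (G_tendsto h0.le (by linarith)) ?_)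
  intro N
  have := Finset.single_le_sum (s := Finset.range (N+1)) (a := 0)
    (f := fun m : ℕ => ph (M - t + m) - ph (M + t + m)) (by
      intro m _
      have hm : (0:ℝ) ≤ m := Nat.cast_nonneg m
      have := ph_anti (a := M - t + m) (b := M + t + m) (by simp only [mem_Ici]; linarith)
        (by simp only [mem_Ici]; linarith) (by linarith)
      linarith) (by simp)
  simpa [G] using this

lemma logGamma_cont {x : ℝ} (hx : 0 < x) : ContinuousAt (fun y => Real.log (Real.Gamma y)) x := by
  have : ContinuousAt Real.Gamma x :=
    (Real.differentiableAt_Gamma (fun m => by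
      have hm : (0:ℝ) ≤ m := Nat.cast_nonneg m
      intro h; linarith)).continuousAt
  exact this.log (Real.Gamma_pos_of_pos hx).ne'

lemma logGamma_cont_comp {k : ℝ → ℝ} {t : ℝ} (hk : ContinuousAt k t) (hx : 0 < k t) :
    ContinuousAt (fun y => Real.log (Real.Gamma (k y))) t :=
  ContinuousAt.comp (f := k) (g := fun y => Real.log (Real.Gamma y)) (logGamma_cont hx) hk

lemma g_cont {M t : ℝ} (h0 : 0 ≤ t) (h1 : 1/4 < M - t) : ContinuousAt (g M) t := by
  unfold g f
  refine ((ContinuousAt.add ?_ ?_).sub (continuousAt_const.mul ?_)).sub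
    ((ContinuousAt.add ?_ ?_).sub (continuousAt_const.mul ?_)) <;>
  · apply logGamma_cont_comp
    · fun_prop
    · linarith

lemma g_neg {M : ℝ} (hM : 3/4 ≤ M) : ∃ t, M - 5/8 < t ∧ t < M - 1/4 ∧ g M t < 0 := by
  let k : ℝ → ℝ := fun t => f (M + t) - (Real.log (Real.Gamma (M - t + 5/4)) +
    Real.log (Real.Gamma (M - t + 3/4)) - 2 * Real.log (Real.Gamma (M - t)))
  have hk : ContinuousAt k (M - 1/4) := by
    simp only [k, f]
    refine ((ContinuousAt.add ?_ ?_).sub (continuousAt_const.mul ?_)).sub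
      ((ContinuousAt.add ?_ ?_).sub (continuousAt_const.mul ?_)) <;>
    · apply logGamma_cont_comp
      · fun_prop
      · linarith
  have hl : Tendsto (fun t => Real.log (M - 1/4 - t)) (𝓝[<] (M - 1/4)) atBot := by
    refine Real.tendsto_log_nhdsGT_zero.comp ?_
    refine tendsto_nhdsWithin_iff.2 ⟨?_, ?_⟩
    · have : ContinuousAt (fun t : ℝ => M - 1/4 - t) (M - 1/4) := by fun_prop
      have h2 := this.tendsto
      simp only [sub_self] at h2
      exact h2.mono_left nhdsWithin_le_nhds
    · filter_upwards [self_mem_nhdsWithin] with t ht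
      simp only [mem_Iio] at ht
      simp only [mem_Ioi]
      linarith
  have hs := (hk.tendsto.mono_left (nhdsWithin_le_nhds (s := Iio (M - 1/4)))).add_atBot hl
  have hm : ∀ᶠ t in 𝓝[<] (M - 1/4), t ∈ Ioo (M - 5/8) (M - 1/4) :=
    Ioo_mem_nhdsLT (by linarith)
  obtain ⟨t, ht, h1, h2⟩ := ((hs.eventually_lt_atBot 0).and hm).exists
  refine ⟨t, h1, h2, ?_⟩
  refine lt_of_eq_of_lt ?_ ht
  have hp : 0 < M - 1/4 - t := by linarith
  have := Real.Gamma_add_one hp.ne'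
  have h3 : Real.log (Real.Gamma (M - t + 3/4)) =
      Real.log (M - 1/4 - t) + Real.log (Real.Gamma (M - t - 1/4)) := by
    rw [show M - t + 3/4 = M - 1/4 - t + 1 by ring, this,
      Real.log_mul hp.ne' (Real.Gamma_pos_of_pos hp).ne']
    congr 3
    ring
  show f (M + t) - f (M - t) = f (M + t) - (Real.log (Real.Gamma (M - t + 5/4)) +
    Real.log (Real.Gamma (M - t + 3/4)) - 2 * Real.log (Real.Gamma (M - t))) +
    Real.log (M - 1/4 - t)
  rw [h3]
  unfold f
  ring

lemma threshold {M : ℝ} (hM : 3/4 ≤ M) : ∃ c, 0 < c ∧ c < M - 1/4 ∧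
    ∀ t, 0 < t → t < M - 1/4 → (0 < g M t ↔ t < c) := by
  obtain ⟨t2, h1, h2, h3⟩ := g_neg hM
  have hp : 0 < g M (M - 5/8) := g_pos (by linarith) le_rfl
  have hc : ContinuousOn (g M) (Icc (M - 5/8) t2) := fun t ht =>
    (g_cont (by linarith [ht.1]) (by linarith [ht.2])).continuousWithinAt
  obtain ⟨c, ⟨hc1, hc2⟩, hc0⟩ := intermediate_value_Icc' h1.le hc ⟨h3.le, hp.le⟩
  have hc1' : M - 5/8 < c := lt_of_le_of_ne hc1 (by rintro rfl; linarith)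
  -- key consequence of concavity
  have key : ∀ s u, M - 5/8 < s → s < u → u < M - 1/4 → 0 ≤ g M u → 0 < g M s := by
    intro s u hs hsu hu hgu
    have hd : 0 < u - (M - 5/8) := by linarith
    have := (g_concave hM).2 (show M - 5/8 ∈ Ico (M - 5/8) (M - 1/4) from ⟨le_rfl, by linarith⟩)
      (show u ∈ Ico (M - 5/8) (M - 1/4) from ⟨by linarith, hu⟩)
      (show 0 ≤ (u - s) / (u - (M - 5/8)) from (div_nonneg (by linarith) hd.le))
      (show 0 ≤ (s - (M - 5/8)) / (u - (M - 5/8)) from div_nonneg (by linarith) hd.le)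
      (by rw [← add_div, div_eq_one_iff_eq hd.ne']; ring)
    have e : ((u - s) / (u - (M - 5/8))) • (M - 5/8) + ((s - (M - 5/8)) / (u - (M - 5/8))) • u
        = s := by
      simp only [smul_eq_mul]
      have := hd.ne'
      generalize hq : M - 5/8 = q at *
      field_simp
      ring
    rw [e] at this
    refine lt_of_lt_of_le ?_ this
    simp only [smul_eq_mul]
    have p1 : 0 < (u - s) / (u - (M - 5/8)) := div_pos (by linarith) hd
    have p2 : 0 ≤ (s - (M - 5/8)) / (u - (M - 5/8)) := div_nonneg (by linarith) hd.le
    have := mul_pos p1 hp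
    have := mul_nonneg p2 hgu
    linarith
  refine ⟨c, by linarith, by linarith, ?_⟩
  intro t ht0 ht1
  constructor
  · intro hg
    by_contra! hct
    rcases hct.eq_or_lt with h | h
    · rw [← h] at hg; linarith
    · have := key c t hc1' h ht1 hg.le
      linarith
  · intro htc
    rcases le_or_gt t (M - 5/8) with h | h
    · exact g_pos ht0 h
    · exact key t c h htc (by linarith) hc0.ge

lemma ineq_iff (n : ℤ) (γ : ℝ) (h0 : 0 < γ) (h1 : γ < (n : ℝ) / 2 - 1) :
    Xi n γ < (((n : ℝ) + 2 * γ) / ((n : ℝ) - 2 * γ)) * Qcurv n γ ↔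
      0 < g (((n : ℝ) - 1) / 4) (γ / 2) := by
  obtain ⟨a, ha⟩ : ∃ a, a = ((n : ℝ) - 1) / 4 - γ / 2 := ⟨_, rfl⟩
  obtain ⟨b, hb⟩ : ∃ b, b = ((n : ℝ) - 1) / 4 + γ / 2 := ⟨_, rfl⟩
  have ha4 : 0 < a - 1/4 := by linarith
  have hb4 : 0 < b - 1/4 := by linarith
  have eX : Xi n γ = 4 ^ γ * (Real.Gamma b ^ 2 / Real.Gamma a ^ 2) := by
    unfold Xi
    rw [show (n : ℝ) / 4 + γ / 2 - 1 / 4 = b by rw [hb]; ring,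
      show (n : ℝ) / 4 - γ / 2 - 1 / 4 = a by rw [ha]; ring]
    ring
  have ga : Real.Gamma (a + 5/4) = (a + 1/4) * Real.Gamma (a + 1/4) := by
    rw [← Real.Gamma_add_one (by linarith)]; congr 1; ring
  have gb : Real.Gamma (b + 5/4) = (b + 1/4) * Real.Gamma (b + 1/4) := by
    rw [← Real.Gamma_add_one (by linarith)]; congr 1; ring
  have p1 := Real.Gamma_pos_of_pos (s := a + 1/4) (by linarith)
  have p2 := Real.Gamma_pos_of_pos (s := b + 1/4) (by linarith)
  have p3 := Real.Gamma_pos_of_pos ha4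
  have p4 := Real.Gamma_pos_of_pos hb4
  have p5 := Real.Gamma_pos_of_pos (s := a) (by linarith)
  have p6 := Real.Gamma_pos_of_pos (s := b) (by linarith)
  have p7 := Real.Gamma_pos_of_pos (s := a + 5/4) (by linarith)
  have p8 := Real.Gamma_pos_of_pos (s := b + 5/4) (by linarith)
  have eQ : (((n : ℝ) + 2 * γ) / ((n : ℝ) - 2 * γ)) * Qcurv n γ =
      4 ^ γ * ((Real.Gamma (b + 5/4) * Real.Gamma (b - 1/4)) /
        (Real.Gamma (a + 5/4) * Real.Gamma (a - 1/4))) := by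
    unfold Qcurv
    rw [ga, gb, show ((n : ℝ) + 2 * γ) / 4 = b + 1/4 by rw [hb]; ring,
      show ((n : ℝ) - 2 * γ) / 4 = a + 1/4 by rw [ha]; ring,
      show ((n : ℝ) - 2 + 2 * γ) / 4 = b - 1/4 by rw [hb]; ring,
      show ((n : ℝ) - 2 - 2 * γ) / 4 = a - 1/4 by rw [ha]; ring,
      show ((n : ℝ) + 2 * γ) = 4 * (b + 1/4) by rw [hb]; ring,
      show ((n : ℝ) - 2 * γ) = 4 * (a + 1/4) by rw [ha]; ring,
      mul_div_mul_left _ _ (by norm_num : (4:ℝ) ≠ 0), mul_assoc (4 ^ γ), mul_assoc (b + 1/4),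
      mul_assoc (a + 1/4), mul_div_assoc, mul_div_mul_comm (b + 1/4)]
    ring
  rw [eX, eQ, mul_lt_mul_iff_right₀ (by positivity),
    ← Real.log_lt_log_iff (by positivity) (by positivity), Real.log_div (by positivity)
      (by positivity), Real.log_div (by positivity) (by positivity), Real.log_mul (by positivity)
      (by positivity), Real.log_mul (by positivity) (by positivity), Real.log_pow, Real.log_pow,
    g, f, f, ← ha, ← hb]
  push_cast
  constructor <;> intro h <;> linarith

end Aux15

theorem stmt15 (n : ℤ) (hn : 4 ≤ n) :
    ∃! c : ℝ, 0 < c ∧ c < (n : ℝ) / 2 - 1 ∧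
      ∀ γ : ℝ, 0 < γ → γ < (n : ℝ) / 2 - 1 →
        (Xi n γ < (((n : ℝ) + 2 * γ) / ((n : ℝ) - 2 * γ)) * Qcurv n γ ↔ γ < c) := by
  have hn' : (4 : ℝ) ≤ n := by exact_mod_cast hn
  obtain ⟨c, h1, h2, h3⟩ := Aux15.threshold (M := ((n : ℝ) - 1) / 4) (by linarith)
  refine ⟨2 * c, ⟨by linarith, by linarith, ?_⟩, ?_⟩
  · intro γ hγ0 hγ1
    rw [Aux15.ineq_iff n γ hγ0 hγ1, h3 (γ / 2) (by linarith) (by linarith)]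
    constructor <;> intro h <;> linarith
  · rintro d ⟨hd0, hd1, hd⟩
    have e : ∀ γ : ℝ, 0 < γ → γ < (n : ℝ) / 2 - 1 → (γ < d ↔ γ < 2 * c) := by
      intro γ hγ0 hγ1
      rw [← hd γ hγ0 hγ1, Aux15.ineq_iff n γ hγ0 hγ1, h3 (γ / 2) (by linarith) (by linarith)]
      constructor <;> intro h <;> linarith
    rcases lt_trichotomy d (2 * c) with h | h | h
    · exact absurd ((e d hd0 hd1).2 h) (lt_irrefl _)
    · exact h
    · exact absurd ((e (2 * c) (by linarith) (by linarith)).1 h) (lt_irrefl _)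
end

section
/- There exists a function c : ℕ → ℝ such that: (1) for every integer n ≥ 4, 0 < c(n) < n/2 − 1 and for all real γ with 0 < γ < n/2 − 1 the inequality Ξ(n,γ) < ((n+2γ)/(n−2γ)) · Q(n,γ) holds if and only if γ < c(n); (2) c(n) < c(n+1) for every integer n ≥ 4; and (3) the sequence n ↦ (n/2 − 1 − c(n)) tends to 0 as n → ∞. -/
open Real Set Filter Topology

noncomputable def phi (y : ℝ) : ℝ := log (y+1) + log (y-1/2) - 2 * log (y-1/4)
noncomputable def phi1 (y : ℝ) : ℝ := 1/(y+1) + 1/(y-1/2) - 2/(y-1/4)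
noncomputable def phi2 (y : ℝ) : ℝ := -(1/(y+1)^2) - 1/(y-1/2)^2 + 2/(y-1/4)^2
noncomputable def GG (x : ℝ) : ℝ := Gamma (x-1/4)^2 / (Gamma (x+1) * Gamma (x-1/2))

lemma phi_deriv {y : ℝ} (hy : 1/2 < y) : HasDerivAt phi (phi1 y) y := by
  have h1 := ((hasDerivAt_id y).add_const 1).log (by simp; linarith)
  have h2 := ((hasDerivAt_id y).sub_const (1/2)).log (by simp; intro h; linarith)
  have h3 := ((hasDerivAt_id y).sub_const (1/4)).log (by simp; intro h; linarith)
  have := (h1.add h2).sub (h3.const_mul 2)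
  refine HasDerivAt.congr_deriv (f := phi) this ?_
  simp [phi1]; ring

lemma phi1_deriv {y : ℝ} (hy : 1/2 < y) : HasDerivAt phi1 (phi2 y) y := by
  have h1 := (hasDerivAt_const y (1:ℝ)).div ((hasDerivAt_id y).add_const 1) (by simp; linarith)
  have h2 := (hasDerivAt_const y (1:ℝ)).div ((hasDerivAt_id y).sub_const (1/2)) (by simp; intro h; linarith)
  have h3 := (hasDerivAt_const y (2:ℝ)).div ((hasDerivAt_id y).sub_const (1/4)) (by simp; intro h; linarith)
  have := (h1.add h2).sub h3
  refine HasDerivAt.congr_deriv (f := phi1) this ?_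
  simp [phi2]; ring

lemma phi_anti : StrictAntiOn phi (Ici (7/8)) := by
  apply strictAntiOn_of_deriv_neg (convex_Ici _)
  · intro y hy
    exact (phi_deriv (by simp at hy; linarith)).continuousAt.continuousWithinAt
  · intro y hy
    simp at hy
    rw [(phi_deriv (by linarith)).deriv]
    have a1 : 0 < y + 1 := by linarith
    have a2 : 0 < y - 1/2 := by linarith
    have a3 : 0 < y - 1/4 := by linarith
    have : phi1 y = (7/8 - y) / ((y+1)*(y-1/2)*(y-1/4)) := by
      have b1 := a1.ne'
      have b2 := a2.ne'
      have b3 := a3.ne'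
      unfold phi1
      rw [div_add_div _ _ b1 b2, div_sub_div _ _ (mul_ne_zero b1 b2) b3]
      congr 1
      ring
    rw [this]
    exact div_neg_of_neg_of_pos (by linarith) (by positivity)

lemma GG_pos {x : ℝ} (hx : 1/2 < x) : 0 < GG x := by
  have h1 := Gamma_pos_of_pos (s := x - 1/4) (by linarith)
  have h2 := Gamma_pos_of_pos (s := x + 1) (by linarith)
  have h3 := Gamma_pos_of_pos (s := x - 1/2) (by linarith)
  unfold GG; positivity

lemma GG_lim {x : ℝ} (hx : 1/2 < x) :
    Tendsto (fun N : ℕ => -log N + ∑ m ∈ Finset.range (N+1), phi (x+m)) atTop (𝓝 (log (GG x))) := by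
  have h1 := BohrMollerup.tendsto_log_gamma (x := x - 1/4) (by linarith)
  have h2 := BohrMollerup.tendsto_log_gamma (x := x + 1) (by linarith)
  have h3 := BohrMollerup.tendsto_log_gamma (x := x - 1/2) (by linarith)
  have p1 := Gamma_pos_of_pos (s := x - 1/4) (by linarith)
  have p2 := Gamma_pos_of_pos (s := x + 1) (by linarith)
  have p3 := Gamma_pos_of_pos (s := x - 1/2) (by linarith)
  have := (h1.const_mul 2).sub (h2.add h3)
  have e : log (GG x) = 2 * log (Gamma (x-1/4)) - (log (Gamma (x+1)) + log (Gamma (x-1/2))) := by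
    unfold GG
    rw [log_div (by positivity) (by positivity), log_mul (by positivity) (by positivity), log_pow]
    norm_num
  rw [e]
  convert this using 2 with N
  simp only [BohrMollerup.logGammaSeq, phi, Finset.sum_add_distrib, Finset.sum_sub_distrib, ← Finset.mul_sum]
  have q1 : ∀ m : ℕ, x - 1/4 + m = x + m - 1/4 := fun m => by ring
  have q2 : ∀ m : ℕ, x + 1 + m = x + m + 1 := fun m => by ring
  have q3 : ∀ m : ℕ, x - 1/2 + m = x + m - 1/2 := fun m => by ring
  simp only [q1, q2, q3]
  ring

lemma GG_lim2 {x y : ℝ} (hx : 1/2 < x) (hy : 1/2 < y) :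
    Tendsto (fun N : ℕ => ∑ m ∈ Finset.range (N+1), (phi (x+m) - phi (y+m))) atTop
      (𝓝 (log (GG x) - log (GG y))) := by
  convert (GG_lim hx).sub (GG_lim hy) using 2 with N
  rw [Finset.sum_sub_distrib]; ring

lemma GG_anti {x y : ℝ} (hx : 7/8 ≤ x) (hxy : x < y) : GG y < GG x := by
  have h := GG_lim2 (x := x) (y := y) (by linarith) (by linarith)
  have hlt : ∀ m : ℕ, 0 < phi (x+m) - phi (y+m) := fun m => by
    have hm : (0:ℝ) ≤ m := Nat.cast_nonneg m
    have := phi_anti (a := x+m) (b := y+m) (by simp; linarith) (by simp; linarith) (by linarith)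
    linarith
  have : phi x - phi y ≤ log (GG x) - log (GG y) := by
    apply ge_of_tendsto' h
    intro N
    rw [Finset.sum_range_succ']
    have := Finset.sum_nonneg (s := Finset.range N) (fun m _ => (hlt (m+1)).le)
    simpa using this
  have h0 := hlt 0
  simp only [Nat.cast_zero, add_zero] at h0
  exact (log_lt_log_iff (GG_pos (by linarith)) (GG_pos (by linarith))).1 (by linarith)

lemma phi2_small {b : ℝ} (h1 : 1/2 < b) (h2 : b ≤ 7/8) : phi2 b ≤ -2 := by
  have a2 : 0 < b - 1/2 := by linarith
  have a3 : 0 < b - 1/4 := by linarith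
  -- 1/(b-1/4) ≤ (3/5) / (b-1/2), and 1/(b-1/2) ≥ 8/3
  have e1 : 1/(b-1/4) ≤ (3/5) * (1/(b-1/2)) := by
    rw [mul_one_div, div_le_div_iff₀ a3 a2]; linarith
  have e2 : 8/3 ≤ 1/(b-1/2) := by rw [le_div_iff₀ a2]; linarith
  have e3 : 8/15 ≤ 1/(b+1) := by rw [le_div_iff₀ (by linarith)]; linarith
  have e0 : 0 ≤ 1/(b-1/4) := by positivity
  have : phi2 b = -(1/(b+1))^2 - (1/(b-1/2))^2 + 2 * (1/(b-1/4))^2 := by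
    simp [phi2]; ring
  rw [this]
  nlinarith [mul_self_le_mul_self e0 e1, mul_self_le_mul_self (by norm_num) e2]

lemma phi2_lower {a : ℝ} (h1 : 9/8 ≤ a) : -1 ≤ phi2 a := by
  have a2 : 0 < a - 1/2 := by linarith
  have a3 : 0 < a - 1/4 := by linarith
  have e1 : (5/7) * (1/(a-1/2)) ≤ 1/(a-1/4) := by
    rw [mul_one_div, div_le_div_iff₀ a2 a3]; linarith
  have e3 : 1/(a+1) ≤ 8/17 := by rw [div_le_iff₀ (by linarith)]; linarith
  have e0 : 0 ≤ 1/(a-1/2) := by positivity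
  have e4 : 0 ≤ 1/(a+1) := by positivity
  have : phi2 a = -(1/(a+1))^2 - (1/(a-1/2))^2 + 2 * (1/(a-1/4))^2 := by
    simp [phi2]; ring
  rw [this]
  nlinarith [mul_self_le_mul_self (by positivity) e1, mul_self_le_mul_self e4 e3]

lemma phi2_nonneg {y : ℝ} (h : 3/2 ≤ y) : 0 ≤ phi2 y := by
  obtain ⟨t, rfl⟩ : ∃ t, y = t + 3/2 := ⟨y - 3/2, by ring⟩
  have ht : 0 ≤ t := by linarith
  have a1 : 0 < t + 5/2 := by linarith
  have a2 : 0 < t + 1 := by linarith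
  have a3 : 0 < t + 5/4 := by linarith
  have : phi2 (t+3/2) = (2 * (t+5/2)^2*(t+1)^2 - ((t+1)^2 + (t+5/2)^2)*(t+5/4)^2) / ((t+5/2)^2*(t+1)^2*(t+5/4)^2) := by
    unfold phi2
    rw [show t+3/2+1 = t+5/2 by ring, show t+3/2-1/2 = t+1 by ring, show t+3/2-1/4 = t+5/4 by ring]
    field_simp; ring
  rw [this]
  apply div_nonneg _ (by positivity)
  ring_nf
  positivity

noncomputable def uu (y : ℝ) : ℝ := 1/(y-1/4)^2 + 1/(y+3/4)^2

lemma phi2_tele {y : ℝ} (h : 3/2 ≤ y) : phi2 y ≤ uu y - uu (y+1) := by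
  have a2 : 0 < y - 1/2 := by linarith
  have e1 : 1/(y-1/4)^2 ≤ 1/(y-1/2)^2 := by
    apply one_div_le_one_div_of_le (by positivity)
    nlinarith
  have e2 : 1/(y+7/4)^2 ≤ 1/(y+1)^2 := by
    apply one_div_le_one_div_of_le (by positivity)
    nlinarith
  have : uu y - uu (y+1) = 1/(y-1/4)^2 - 1/(y+7/4)^2 := by
    unfold uu
    rw [show y+1-1/4 = y+3/4 by ring, show y+1+3/4 = y+7/4 by ring]; ring
  rw [this]; 
  have : phi2 y = -(1/(y+1)^2) - 1/(y-1/2)^2 + 2*(1/(y-1/4)^2) := by unfold phi2; ring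
  rw [this]; linarith

lemma uu_bound {y : ℝ} (h : 3/2 ≤ y) : uu y ≤ 1 := by
  have e1 : 1/(y-1/4)^2 ≤ 16/25 := by
    rw [div_le_div_iff₀ (by nlinarith) (by norm_num)]; nlinarith
  have e2 : 1/(y+3/4)^2 ≤ 9/25 := by
    rw [div_le_div_iff₀ (by nlinarith) (by norm_num)]; nlinarith
  unfold uu; linarith

lemma sum_bound {y : ℝ} (h : 3/2 ≤ y) (N : ℕ) : ∑ m ∈ Finset.range N, phi2 (y + m) ≤ 1 := by
  have : ∑ m ∈ Finset.range N, phi2 (y + m) ≤ uu y - uu (y + N) := by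
    induction N with
    | zero => simp
    | succ k ih =>
      have hk : (0:ℝ) ≤ k := Nat.cast_nonneg k
      rw [Finset.sum_range_succ]
      have := phi2_tele (y := y + k) (by linarith)
      push_cast
      rw [← add_assoc]
      linarith
  have h2 := uu_bound h
  have h3 : 0 ≤ uu (y+N) := by unfold uu; positivity
  linarith

lemma sum2 {s b : ℝ} (hs : 2 ≤ s) (h1 : 1/2 < b) (h2 : b ≤ 7/8) (N : ℕ) :
    ∑ m ∈ Finset.range (N+1), (phi2 (b+m) - phi2 (s-b+m)) ≤ 0 := by
  rw [Finset.sum_sub_distrib, Finset.sum_range_succ', Finset.sum_range_succ' (fun m : ℕ => phi2 (s-b+m))]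
  have e1 := phi2_small h1 h2
  have e2 := phi2_lower (a := s-b) (by linarith)
  have e3 := sum_bound (y := b+1) (by linarith) N
  have e4 : 0 ≤ ∑ m ∈ Finset.range N, phi2 (s-b+((m+1:ℕ):ℝ)) := by
    apply Finset.sum_nonneg
    intro m _
    apply phi2_nonneg
    have : (0:ℝ) ≤ m := Nat.cast_nonneg m
    push_cast; linarith
  have e5 : ∑ m ∈ Finset.range N, phi2 (b+((m+1:ℕ):ℝ)) = ∑ m ∈ Finset.range N, phi2 (b+1+m) := by
    apply Finset.sum_congr rfl; intro m _; push_cast; congr 1; ring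
  rw [e5]
  simp only [Nat.cast_zero, add_zero]
  linarith

noncomputable def DN (s : ℝ) (N : ℕ) (b : ℝ) : ℝ :=
  ∑ m ∈ Finset.range (N+1), (phi (b+m) - phi (s-b+m))

lemma DN_deriv {s b : ℝ} (hs : 2 ≤ s) (h1 : 1/2 < b) (h2 : b ≤ 7/8) (N : ℕ) :
    HasDerivAt (DN s N) (∑ m ∈ Finset.range (N+1), (phi1 (b+m) + phi1 (s-b+m))) b := by
  unfold DN
  apply HasDerivAt.fun_sum
  intro m _
  have hm : (0:ℝ) ≤ m := Nat.cast_nonneg m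
  have e1 := (phi_deriv (y := b + m) (by linarith)).comp b ((hasDerivAt_id b).add_const (m:ℝ))
  have e2 := (phi_deriv (y := s - b + m) (by linarith)).comp b
    (((hasDerivAt_id b).const_sub s).add_const (m:ℝ))
  refine HasDerivAt.congr_deriv (e1.sub e2) ?_
  ring

lemma DN_deriv2 {s b : ℝ} (hs : 2 ≤ s) (h1 : 1/2 < b) (h2 : b ≤ 7/8) (N : ℕ) :
    HasDerivAt (fun b => ∑ m ∈ Finset.range (N+1), (phi1 (b+m) + phi1 (s-b+m)))
      (∑ m ∈ Finset.range (N+1), (phi2 (b+m) - phi2 (s-b+m))) b := by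
  apply HasDerivAt.fun_sum
  intro m _
  have hm : (0:ℝ) ≤ m := Nat.cast_nonneg m
  have e1 := (phi1_deriv (y := b + m) (by linarith)).comp b ((hasDerivAt_id b).add_const (m:ℝ))
  have e2 := (phi1_deriv (y := s - b + m) (by linarith)).comp b
    (((hasDerivAt_id b).const_sub s).add_const (m:ℝ))
  refine HasDerivAt.congr_deriv (e1.add e2) ?_
  ring

lemma DN_concave {s : ℝ} (hs : 2 ≤ s) (N : ℕ) : ConcaveOn ℝ (Ioc (1/2) (7/8)) (DN s N) := by
  apply concaveOn_of_hasDerivWithinAt2_nonpos (convex_Ioc _ _)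
    (f' := fun b => ∑ m ∈ Finset.range (N+1), (phi1 (b+m) + phi1 (s-b+m)))
    (f'' := fun b => ∑ m ∈ Finset.range (N+1), (phi2 (b+m) - phi2 (s-b+m)))
  · intro b hb
    exact (DN_deriv hs hb.1 hb.2 N).continuousAt.continuousWithinAt
  · intro b hb
    have hb := interior_subset hb
    exact (DN_deriv hs hb.1 hb.2 N).hasDerivWithinAt
  · intro b hb
    have hb := interior_subset hb
    exact (DN_deriv2 hs hb.1 hb.2 N).hasDerivWithinAt
  · intro b hb
    have hb := interior_subset hb
    exact sum2 hs hb.1 hb.2 N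

noncomputable def DD (s b : ℝ) : ℝ := log (GG b) - log (GG (s-b))

lemma DD_concave {s : ℝ} (hs : 2 ≤ s) : ConcaveOn ℝ (Ioc (1/2) (7/8)) (DD s) := by
  have L : ∀ b ∈ Ioc (1/2:ℝ) (7/8), Tendsto (fun N => DN s N b) atTop (𝓝 (DD s b)) := by
    intro b hb
    exact GG_lim2 hb.1 (by linarith [hb.2])
  refine ⟨convex_Ioc _ _, ?_⟩
  intro x hx y hy a c ha hc hac
  refine le_of_tendsto_of_tendsto' (((L x hx).const_smul a).add ((L y hy).const_smul c))
    (L _ (convex_Ioc _ _ hx hy ha hc hac)) ?_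
  intro N
  exact (DN_concave hs N).2 hx hy ha hc hac

lemma DD_pos_iff {s b : ℝ} (h1 : 1/2 < b) (h2 : b < s - 1/2) : 0 < DD s b ↔ GG (s-b) < GG b := by
  unfold DD
  rw [sub_pos, log_lt_log_iff (GG_pos (by linarith)) (GG_pos h1)]

lemma up_closed {s b b' : ℝ} (hs : 2 ≤ s) (h1 : 1/2 < b) (hbb : b < b') (h2 : b' < s/2)
    (h : GG (s-b) < GG b) : GG (s-b') < GG b' := by
  rcases le_or_gt (7/8) b' with h3 | h3
  · exact GG_anti h3 (by linarith)
  · rw [← DD_pos_iff (by linarith) (by linarith)] at h ⊢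
    have h78 : 0 < DD s (7/8) := by
      rw [DD_pos_iff (by norm_num) (by linarith)]
      exact GG_anti le_rfl (by linarith)
    have := (DD_concave hs).min_le_of_mem_Icc (x := b) (y := 7/8) (z := b') ⟨h1, by linarith⟩
      ⟨by norm_num, le_rfl⟩ ⟨hbb.le, h3.le⟩
    exact lt_of_lt_of_le (lt_min h h78) this

lemma Gamma_contAt {x : ℝ} (hx : 0 < x) : ContinuousAt Gamma x := by
  apply (differentiableAt_Gamma _).continuousAt
  intro m hm
  have : (0:ℝ) ≤ m := Nat.cast_nonneg m
  linarith

lemma GG_cont {x : ℝ} (hx : 1/2 < x) : ContinuousAt GG x := by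
  have h2 := Gamma_pos_of_pos (s := x + 1) (by linarith)
  have h3 := Gamma_pos_of_pos (s := x - 1/2) (by linarith)
  unfold GG
  refine ContinuousAt.div (ContinuousAt.pow (ContinuousAt.comp' (Gamma_contAt (by linarith)) (by fun_prop)) 2)
    (ContinuousAt.mul (ContinuousAt.comp' (Gamma_contAt (by linarith)) (by fun_prop))
      (ContinuousAt.comp' (Gamma_contAt (by linarith)) (by fun_prop))) (by positivity)

lemma GG_zero : Tendsto GG (𝓝[>] (1/2)) (𝓝 0) := by
  have h2 := Gamma_pos_of_pos (s := (1/2:ℝ) + 1) (by norm_num)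
  have h3 := Gamma_pos_of_pos (s := (1/2:ℝ) + 1/2) (by norm_num)
  have hc : ContinuousAt (fun x : ℝ => Gamma (x-1/4)^2 * (x-1/2) / (Gamma (x+1) * Gamma (x+1/2))) (1/2) := by
    refine ContinuousAt.div (ContinuousAt.mul (ContinuousAt.pow (ContinuousAt.comp' (Gamma_contAt (by norm_num)) (by fun_prop)) 2) (by fun_prop))
      (ContinuousAt.mul (ContinuousAt.comp' (Gamma_contAt (by norm_num)) (by fun_prop))
      (ContinuousAt.comp' (Gamma_contAt (by norm_num)) (by fun_prop))) (by positivity)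
  have := hc.tendsto.mono_left (nhdsWithin_le_nhds (s := Ioi (1/2)))
  simp only [sub_self, mul_zero, zero_div] at this
  refine this.congr' ?_
  filter_upwards [self_mem_nhdsWithin] with x hx
  have hx : 1/2 < x := hx
  have h4 : x - 1/2 ≠ 0 := by intro h; linarith
  have p2 := Gamma_pos_of_pos (s := x + 1) (by linarith)
  have p3 := Gamma_pos_of_pos (s := x - 1/2) (by linarith)
  have e : Gamma (x + 1/2) = (x-1/2) * Gamma (x-1/2) := by
    rw [← Gamma_add_one h4]; congr 1; ring
  rw [e]; unfold GG
  rw [div_eq_div_iff (mul_ne_zero p2.ne' (mul_ne_zero h4 p3.ne')) (by positivity)]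
  ring

lemma GG_le {x : ℝ} (hx : 1/2 < x) : GG x ≤ 1 / x := by
  have p0 := Gamma_pos_of_pos (s := x) (by linarith)
  have p1 := Gamma_pos_of_pos (s := x - 1/4) (by linarith)
  have p3 := Gamma_pos_of_pos (s := x - 1/2) (by linarith)
  have h0 := convexOn_log_Gamma.2
  have h := @h0 x (by simp; linarith) (x-1/2) (by simp; linarith)
    (1/2) (1/2) (by norm_num) (by norm_num) (by norm_num)
  simp only [smul_eq_mul, Function.comp] at h
  rw [show 1/2 * x + 1/2 * (x-1/2) = x - 1/4 by ring] at h
  have h' : log (Gamma (x-1/4)^2) ≤ log (Gamma x * Gamma (x-1/2)) := by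
    rw [log_pow, log_mul p0.ne' p3.ne']; push_cast; linarith
  rw [log_le_log_iff (by positivity) (by positivity)] at h'
  unfold GG
  rw [Gamma_add_one (by linarith), div_le_div_iff₀ (by have : 0 < x := by linarith
                                                       positivity) (by linarith)]
  nlinarith

lemma exists_beta {s : ℝ} (hs : 2 ≤ s) : ∃ β : ℝ, 1/2 < β ∧ β < 7/8 ∧
    ∀ b, 1/2 < b → b < s/2 → (GG (s-b) < GG b ↔ β < b) := by
  set S : Set ℝ := {b | 1/2 < b ∧ b < s/2 ∧ GG (s-b) < GG b} with hS
  have hbd : BddBelow S := ⟨1/2, fun b hb => hb.1.le⟩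
  have hopen : ∀ b ∈ S, ∃ b' ∈ S, b' < b := by
    intro b hb
    have c1 : ContinuousAt GG b := GG_cont hb.1
    have c2 : ContinuousAt (fun b => GG (s-b)) b :=
      ContinuousAt.comp' (GG_cont (by linarith [hb.2.1])) (by fun_prop)
    have ev : ∀ᶠ y in 𝓝[<] b, GG (s-y) < GG y :=
      (c2.eventually_lt c1 hb.2.2).filter_mono nhdsWithin_le_nhds
    have ev2 : ∀ᶠ y in 𝓝[<] b, 1/2 < y :=
      (eventually_gt_nhds hb.1).filter_mono nhdsWithin_le_nhds
    obtain ⟨y, hy1, hy2, hy3⟩ := (ev.and (ev2.and self_mem_nhdsWithin)).exists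
    have hy3 : y < b := hy3
    exact ⟨y, ⟨hy2, by linarith [hb.2.1], hy1⟩, hy3⟩
  have h78 : (7/8:ℝ) ∈ S := ⟨by norm_num, by linarith, GG_anti le_rfl (by linarith)⟩
  have hlt : ∀ b ∈ S, sInf S < b := by
    intro b hb
    obtain ⟨b', h1, h2⟩ := hopen b hb
    exact lt_of_le_of_lt (csInf_le hbd h1) h2
  refine ⟨sInf S, ?_, hlt _ h78, ?_⟩
  · have c2 : ContinuousAt (fun b => GG (s-b)) (1/2) :=
      ContinuousAt.comp' (GG_cont (by linarith)) (by fun_prop)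
    have ev := GG_zero.eventually_lt (c2.tendsto.mono_left (nhdsWithin_le_nhds (s := Ioi (1/2))))
      (GG_pos (by linarith))
    obtain ⟨u, hu, hu2⟩ := (mem_nhdsGT_iff_exists_Ioo_subset).1 ev
    have hu : 1/2 < u := hu
    refine lt_of_lt_of_le hu (le_csInf ⟨_, h78⟩ ?_)
    intro b hb
    by_contra hc
    have : GG b < GG (s-b) := hu2 ⟨hb.1, lt_of_not_ge hc⟩
    exact lt_asymm this hb.2.2
  · intro b h1 h2
    refine ⟨fun h => hlt b ⟨h1, h2, h⟩, fun h => ?_⟩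
    obtain ⟨y, hy, hyb⟩ := exists_lt_of_csInf_lt ⟨_, h78⟩ h
    exact up_closed hs hy.1 hyb h2 hy.2.2

lemma ineq_iff (n : ℕ) (γ : ℝ) (h0 : 0 < γ) (h1 : γ < (n:ℝ)/2 - 1) :
    Xi (n : ℤ) γ < (((n : ℝ) + 2 * γ) / ((n : ℝ) - 2 * γ)) * Qcurv (n : ℤ) γ ↔
      GG ((n:ℝ)/2 - ((n:ℝ) - 2*γ)/4) < GG (((n:ℝ) - 2*γ)/4) := by
  obtain ⟨b, hb⟩ : ∃ b, b = ((n:ℝ) - 2*γ)/4 := ⟨_, rfl⟩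
  obtain ⟨a, ha⟩ : ∃ a, a = ((n:ℝ) + 2*γ)/4 := ⟨_, rfl⟩
  have hb1 : 1/2 < b := by linarith
  have ha1 : 1/2 < a := by linarith
  have q : (4:ℝ)^γ > 0 := by positivity
  unfold Xi Qcurv GG
  push_cast
  rw [show (n:ℝ)/2 - ((n:ℝ) - 2*γ)/4 = a by rw [ha]; ring, ← hb, ← ha,
    show (n:ℝ)/4 + γ/2 - 1/4 = a - 1/4 by rw [ha]; ring,
    show (n:ℝ)/4 - γ/2 - 1/4 = b - 1/4 by rw [hb]; ring,
    show ((n:ℝ) - 2 + 2*γ)/4 = a - 1/2 by rw [ha]; ring,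
    show ((n:ℝ) - 2 - 2*γ)/4 = b - 1/2 by rw [hb]; ring,
    show (n:ℝ) + 2*γ = 4*a by rw [ha]; ring,
    show (n:ℝ) - 2*γ = 4*b by rw [hb]; ring,
    Gamma_add_one (by linarith : a ≠ 0), Gamma_add_one (by linarith : b ≠ 0)]
  have a1 := Gamma_pos_of_pos (s := a) (by linarith)
  have a2 := Gamma_pos_of_pos (s := a - 1/4) (by linarith)
  have a3 := Gamma_pos_of_pos (s := a - 1/2) (by linarith)
  have b1 := Gamma_pos_of_pos (s := b) (by linarith)
  have b2 := Gamma_pos_of_pos (s := b - 1/4) (by linarith)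
  have b3 := Gamma_pos_of_pos (s := b - 1/2) (by linarith)
  have a0 : 0 < a := by linarith
  have b0 : 0 < b := by linarith
  generalize Gamma a = A1 at *
  generalize Gamma (a-1/4) = A2 at *
  generalize Gamma (a-1/2) = A3 at *
  generalize Gamma b = B1 at *
  generalize Gamma (b-1/4) = B2 at *
  generalize Gamma (b-1/2) = B3 at *
  generalize (4:ℝ)^γ = Q at *
  rw [div_mul_div_comm, div_lt_div_iff₀ (by positivity) (by positivity),
    div_lt_div_iff₀ (by positivity) (by positivity)]
  have k : 0 < 4 * Q := by positivity
  rw [← mul_lt_mul_iff_right₀ k (b := A2 ^ 2 * (b * B1 * B3))]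
  constructor <;> intro h <;> nlinarith

theorem stmt16 :
    ∃ c : ℕ → ℝ,
      (∀ n : ℕ, 4 ≤ n →
        0 < c n ∧ c n < (n : ℝ) / 2 - 1 ∧
        ∀ γ : ℝ, 0 < γ → γ < (n : ℝ) / 2 - 1 →
          (Xi (n : ℤ) γ < (((n : ℝ) + 2 * γ) / ((n : ℝ) - 2 * γ)) * Qcurv (n : ℤ) γ ↔
            γ < c n)) ∧
      (∀ n : ℕ, 4 ≤ n → c n < c (n + 1)) ∧
      Filter.Tendsto (fun n : ℕ => (n : ℝ) / 2 - 1 - c n) Filter.atTop (nhds 0) := by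
  have H : ∀ n : ℕ, ∃ β : ℝ, 4 ≤ n → 1/2 < β ∧ β < 7/8 ∧
      ∀ b, 1/2 < b → b < (n:ℝ)/2/2 → (GG ((n:ℝ)/2-b) < GG b ↔ β < b) := by
    intro n
    by_cases hn : 4 ≤ n
    · have : (4:ℝ) ≤ n := by exact_mod_cast hn
      obtain ⟨β, h⟩ := exists_beta (s := (n:ℝ)/2) (by linarith)
      exact ⟨β, fun _ => h⟩
    · exact ⟨0, fun h => absurd h hn⟩
  choose β hβ using H
  refine ⟨fun n => (n:ℝ)/2 - 2 * β n, ?_, ?_, ?_⟩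
  · intro n hn
    obtain ⟨h1, h2, h3⟩ := hβ n hn
    have hn' : (4:ℝ) ≤ n := by exact_mod_cast hn
    refine ⟨by linarith, by linarith, ?_⟩
    intro γ g0 g1
    rw [ineq_iff n γ g0 g1, h3 _ (by linarith) (by linarith)]
    constructor <;> intro h <;> linarith
  · intro n hn
    obtain ⟨h1, h2, h3⟩ := hβ n hn
    obtain ⟨k1, k2, k3⟩ := hβ (n+1) (by omega)
    have hn' : (4:ℝ) ≤ n := by exact_mod_cast hn
    push_cast at k3 ⊢
    have : β (n+1) ≤ β n := by
      by_contra hc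
      push Not at hc
      obtain ⟨b, hb1, hb2⟩ := exists_between hc
      have e := (h3 b (by linarith) (by linarith)).2 hb1
      have e2 : GG (((n:ℝ)+1)/2 - b) < GG ((n:ℝ)/2 - b) := GG_anti (by linarith) (by linarith)
      have := (k3 b (by linarith) (by linarith)).1 (e2.trans e)
      linarith
    linarith
  · rw [Metric.tendsto_atTop]
    intro ε hε
    obtain ⟨b, hb1, hb2⟩ : ∃ b : ℝ, 1/2 < b ∧ b < min (7/8) (1/2 + ε/2) :=
      exists_between (lt_min (by norm_num) (by linarith))
    have hb3 := lt_min_iff.1 hb2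
    have hG := GG_pos hb1
    obtain ⟨N, hN⟩ := exists_nat_gt (2 * (b + 1 / GG b))
    refine ⟨max 4 N, fun n hn => ?_⟩
    have hn4 : 4 ≤ n := le_trans (le_max_left _ _) hn
    have hnN : N ≤ n := le_trans (le_max_right _ _) hn
    have hn' : (4:ℝ) ≤ n := by exact_mod_cast hn4
    have hN' : (N:ℝ) ≤ n := by exact_mod_cast hnN
    obtain ⟨h1, h2, h3⟩ := hβ n hn4
    have hx : 1 / GG b < (n:ℝ)/2 - b := by linarith
    have e : GG ((n:ℝ)/2 - b) < GG b := by
      refine lt_of_le_of_lt (GG_le (by linarith)) ?_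
      rw [div_lt_iff₀ hG] at hx
      rw [div_lt_iff₀ (by linarith)]
      linarith
    have := (h3 b hb1 (by linarith)).1 e
    rw [Real.dist_eq, sub_zero, abs_lt]
    constructor <;> linarith
end
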